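/- arXiv:1403.0418 — 4 statements merged into one kernel-verified Lean document; each statement's English description precedes it below -/
import Mathlib

section
/- Let c = (c₁,c₂,c₃) ∈ ℝ³ and t = (t₁,t₂,t₃) ∈ ℝ³. The matrix ρ̃(c,t) is positive semidefinite if and only if the following three conditions hold, where q = (1+t₁+t₂−t₃)(1+t₁−t₂+t₃)(1−t₁+t₂+t₃)(1−t₁−t₂−t₃): (i) ‖c‖⁴ − 2‖c‖²(1 − t₁² − t₂² − t₃²) − 4(t₁²c₁² + t₂²c₂² + t₃²c₃²) + q ≥ 0; (ii) ‖c‖² ≤ 1 − (t₁² + t₂² + t₃²) − 2t₁t₂t₃; (iii) ‖c‖² + t₁² + t₂² + t₃² ≤ 3. -/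
open Matrix Kronecker Polynomial
open scoped ComplexOrder

noncomputable section

/-- The Pauli matrices: `pauli 0 = I₂`, `pauli 1 = σ₁`, `pauli 2 = σ₂`, `pauli 3 = σ₃`. -/
def pauli : Fin 4 → Matrix (Fin 2) (Fin 2) ℂ
  | 0 => !![1, 0; 0, 1]
  | 1 => !![0, 1; 1, 0]
  | 2 => !![0, -Complex.I; Complex.I, 0]
  | 3 => !![1, 0; 0, -1]

/-- Euclidean norm of a vector in ℝ³. -/
def norm3 (v : Fin 3 → ℝ) : ℝ := Real.sqrt (∑ i, v i ^ 2)

/-- The canonical axis-aligned two-qubit operator with steering-ellipsoid centre `c`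
and signed semiaxes `t`:
`ρ̃(c,t) = (1/4)(I₄ + Σᵢ cᵢ (σᵢ⊗σ₀) + Σᵢ tᵢ (σᵢ⊗σᵢ))`. -/
def rhoTilde (c t : Fin 3 → ℝ) : Matrix (Fin 2 × Fin 2) (Fin 2 × Fin 2) ℂ :=
  (1 / 4 : ℂ) • ((1 : Matrix (Fin 2 × Fin 2) (Fin 2 × Fin 2) ℂ)
    + ∑ i : Fin 3, (c i : ℂ) • (pauli i.succ ⊗ₖ pauli 0)
    + ∑ i : Fin 3, (t i : ℂ) • (pauli i.succ ⊗ₖ pauli i.succ))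

/-!
A Hermitian matrix `A` is positive semidefinite iff the monic polynomial `det (X + A) = ∏ (X + λᵢ)`
has nonnegative coefficients: nonnegative `λᵢ` clearly give such coefficients, and conversely a
monic polynomial with nonnegative coefficients has no positive root `-λᵢ`. For `A = 4 ρ̃(c,t)` this
polynomial is a quartic whose `X³` coefficient is `4` and whose remaining lower coefficients are
positive multiples of the differences of the two sides of (iii), (ii), (i).
-/

theorem coeff_prod_nonneg {ι R : Type*} [CommSemiring R] [PartialOrder R] [IsOrderedRing R]
    {s : Finset ι} {p : ι → R[X]} (hp : ∀ i ∈ s, ∀ k, 0 ≤ (p i).coeff k) (k : ℕ) :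
    0 ≤ (∏ i ∈ s, p i).coeff k := by
  refine Finset.prod_induction p (fun q => ∀ k, 0 ≤ q.coeff k) (fun f g hf hg k => ?_)
    (fun k => ?_) hp k
  · rw [coeff_mul]
    exact Finset.sum_nonneg fun ij _ => mul_nonneg (hf ij.1) (hg ij.2)
  · rw [coeff_one]
    split_ifs
    exacts [zero_le_one, le_rfl]

theorem eval_pos_of_coeff_nonneg {R : Type*} [Semiring R] [PartialOrder R] [IsStrictOrderedRing R]
    {p : R[X]} (hp : p ≠ 0) (hcoeff : ∀ k, 0 ≤ p.coeff k) {x : R} (hx : 0 < x) :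
    0 < p.eval x := by
  rw [eval_eq_sum, Polynomial.sum]
  refine Finset.sum_pos (fun k hk => ?_) (nonempty_support_iff.mpr hp)
  exact mul_pos ((hcoeff k).lt_of_ne' (mem_support_iff.mp hk)) (pow_pos hx k)

theorem coeff_prod_X_add_C_nonneg_iff {ι R : Type*} [CommRing R] [LinearOrder R]
    [IsStrictOrderedRing R] {s : Finset ι} {a : ι → R} :
    (∀ k, 0 ≤ (∏ i ∈ s, (X + C (a i))).coeff k) ↔ ∀ i ∈ s, 0 ≤ a i := by
  constructor
  · intro hcoeff i hi
    by_contra! hneg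
    have hmonic : (∏ i ∈ s, (X + C (a i))).Monic :=
      monic_prod_of_monic _ _ fun i _ => monic_X_add_C _
    have hroot : (∏ i ∈ s, (X + C (a i))).eval (-a i) = 0 := by
      rw [eval_prod]
      exact Finset.prod_eq_zero hi (by simp)
    exact (eval_pos_of_coeff_nonneg hmonic.ne_zero hcoeff (neg_pos.mpr hneg)).ne' hroot
  · intro ha
    refine coeff_prod_nonneg fun i hi k => ?_
    rw [coeff_add, coeff_X, coeff_C]
    exact add_nonneg (by split_ifs <;> simp) (by split_ifs <;> simp [ha i hi])

theorem coeff_monic_quartic_nonneg_iff {R : Type*} [Semiring R] [PartialOrder R] [IsOrderedRing R]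
    {a b c d : R} :
    (∀ k, 0 ≤ (X ^ 4 + C a * X ^ 3 + C b * X ^ 2 + C c * X + C d).coeff k) ↔
      0 ≤ a ∧ 0 ≤ b ∧ 0 ≤ c ∧ 0 ≤ d := by
  constructor
  · intro h
    exact ⟨by simpa [coeff_X, coeff_C] using h 3, by simpa [coeff_X, coeff_C] using h 2,
      by simpa using h 1, by simpa using h 0⟩
  · rintro ⟨ha, hb, hc, hd⟩ k
    simp only [coeff_add, coeff_C_mul, coeff_X_pow, coeff_X, coeff_C]
    have mul_ite_nonneg {x : R} (hx : 0 ≤ x) (P : Prop) [Decidable P] :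
        0 ≤ x * if P then 1 else 0 := mul_nonneg hx (by split_ifs <;> simp)
    have hconst : 0 ≤ if k = 0 then d else 0 := by split_ifs <;> simp [hd]
    have hlead : (0 : R) ≤ if k = 4 then 1 else 0 := by split_ifs <;> simp
    exact add_nonneg (add_nonneg (add_nonneg (add_nonneg hlead (mul_ite_nonneg ha _))
      (mul_ite_nonneg hb _)) (mul_ite_nonneg hc _)) hconst

section Hermitian

variable {n 𝕜 : Type*} [Fintype n] [DecidableEq n] [RCLike 𝕜] {A : Matrix n n 𝕜}

theorem charpoly_neg_eq_map_prod_X_add_C_eigenvalues (hA : A.IsHermitian) :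
    (-A).charpoly = (∏ i, (X + C (hA.eigenvalues i))).map (algebraMap ℝ 𝕜) := by
  rw [← cfc_neg_id (R := ℝ) (a := A), hA.charpoly_cfc_eq]
  simp [Polynomial.map_prod]

theorem posSemidef_iff_charpoly_neg_coeff_nonneg (hA : A.IsHermitian) :
    A.PosSemidef ↔ ∀ k, 0 ≤ (-A).charpoly.coeff k := by
  simp [charpoly_neg_eq_map_prod_X_add_C_eigenvalues hA, coeff_prod_X_add_C_nonneg_iff,
    hA.posSemidef_iff_eigenvalues_nonneg, Pi.le_def, -map_prod]

theorem posSemidef_smul_iff {m : Type*} {M : Matrix m m 𝕜} {a : ℝ} (ha : 0 < a) :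
    (a • M).PosSemidef ↔ M.PosSemidef := by
  refine ⟨fun h => ?_, fun h => h.smul ha.le⟩
  simpa [smul_smul, ha.ne'] using h.smul (inv_nonneg.mpr ha.le)

end Hermitian

theorem det_axisAligned {R : Type*} [CommRing R] (p q r s u v z w : R) :
    det !![p, 0, z, u; 0, q, v, z; w, v, r, 0; u, w, 0, s] =
      (p * s - u ^ 2) * (q * r - v ^ 2) - z * w * (p * r + q * s) - u * v * (z ^ 2 + w ^ 2)
        + (z * w) ^ 2 := by
  simp [det_succ_row_zero, Fin.sum_univ_succ, Fin.succAbove]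
  ring

theorem charpoly_neg_axisAligned {R : Type*} [CommRing R] (p q r s u v z w : R) :
    (-!![p, 0, z, u; 0, q, v, z; w, v, r, 0; u, w, 0, s]).charpoly =
      ((X + C p) * (X + C s) - C u ^ 2) * ((X + C q) * (X + C r) - C v ^ 2)
        - C (z * w) * ((X + C p) * (X + C r) + (X + C q) * (X + C s))
        - C u * C v * C (z ^ 2 + w ^ 2) + C (z * w) ^ 2 := by
  have hcharmatrix : charmatrix (-!![p, 0, z, u; 0, q, v, z; w, v, r, 0; u, w, 0, s]) =
      !![X + C p, 0, C z, C u;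
         0, X + C q, C v, C z;
         C w, C v, X + C r, 0;
         C u, C w, 0, X + C s] := by
    ext1 i j
    fin_cases i <;> fin_cases j <;> simp
  rw [charpoly, hcharmatrix, det_axisAligned]
  simp only [map_add, map_mul, map_pow]

theorem pauli_isHermitian (i : Fin 4) : (pauli i).IsHermitian := by
  fin_cases i <;> ext j k <;> fin_cases j <;> fin_cases k <;> simp [pauli]

theorem rhoTilde_isHermitian (c t : Fin 3 → ℝ) : (rhoTilde c t).IsHermitian := by
  simp [rhoTilde, Matrix.IsHermitian, conjTranspose_sum, conjTranspose_kronecker,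
    (pauli_isHermitian _).eq]

theorem reindex_four_smul_rhoTilde (c t : Fin 3 → ℝ) :
    reindex finProdFinEquiv finProdFinEquiv ((4 : ℝ) • rhoTilde c t) =
      !![(1 + c 2 + t 2 : ℂ), 0, c 0 - c 1 * Complex.I, t 0 - t 1;
         0, 1 + c 2 - t 2, t 0 + t 1, c 0 - c 1 * Complex.I;
         c 0 + c 1 * Complex.I, t 0 + t 1, 1 - c 2 - t 2, 0;
         t 0 - t 1, c 0 + c 1 * Complex.I, 0, 1 - c 2 + t 2] := by
  ext i j
  fin_cases i <;> fin_cases j <;>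
    simp [rhoTilde, pauli, Fin.sum_univ_three, finProdFinEquiv, Fin.divNat, Fin.modNat] <;> ring

theorem norm3_sq (v : Fin 3 → ℝ) : norm3 v ^ 2 = v 0 ^ 2 + v 1 ^ 2 + v 2 ^ 2 := by
  rw [norm3, Real.sq_sqrt (Finset.sum_nonneg fun i _ => sq_nonneg _), Fin.sum_univ_three]

theorem charpoly_neg_four_smul_rhoTilde (c t : Fin 3 → ℝ) :
    (-((4 : ℝ) • rhoTilde c t)).charpoly =
      (X ^ 4 + C 4 * X ^ 3 + C (2 * (3 - (norm3 c ^ 2 + t 0 ^ 2 + t 1 ^ 2 + t 2 ^ 2))) * X ^ 2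
        + C (4 * (1 - (t 0 ^ 2 + t 1 ^ 2 + t 2 ^ 2) - 2 * (t 0 * t 1 * t 2) - norm3 c ^ 2)) * X
        + C (norm3 c ^ 4 - 2 * norm3 c ^ 2 * (1 - t 0 ^ 2 - t 1 ^ 2 - t 2 ^ 2)
          - 4 * (t 0 ^ 2 * c 0 ^ 2 + t 1 ^ 2 * c 1 ^ 2 + t 2 ^ 2 * c 2 ^ 2)
          + (1 + t 0 + t 1 - t 2) * (1 + t 0 - t 1 + t 2)
            * (1 - t 0 + t 1 + t 2) * (1 - t 0 - t 1 - t 2))).map Complex.ofRealHom := by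
  rw [← charpoly_reindex finProdFinEquiv]
  have hnorm4 : norm3 c ^ 4 = (norm3 c ^ 2) ^ 2 := by ring
  have hneg : reindex finProdFinEquiv finProdFinEquiv (-((4 : ℝ) • rhoTilde c t)) =
      -reindex finProdFinEquiv finProdFinEquiv ((4 : ℝ) • rhoTilde c t) := rfl
  have hmul : (c 0 - c 1 * Complex.I) * (c 0 + c 1 * Complex.I) = (c 0 : ℂ) ^ 2 + c 1 ^ 2 := by
    linear_combination -(c 1 : ℂ) ^ 2 * Complex.I_sq
  have hsq : (c 0 - c 1 * Complex.I) ^ 2 + (c 0 + c 1 * Complex.I) ^ 2 =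
      2 * ((c 0 : ℂ) ^ 2 - c 1 ^ 2) := by
    linear_combination 2 * (c 1 : ℂ) ^ 2 * Complex.I_sq
  rw [hneg, reindex_four_smul_rhoTilde, charpoly_neg_axisAligned, hmul, hsq, hnorm4,
    norm3_sq]
  simp only [Polynomial.map_add, Polynomial.map_mul, Polynomial.map_pow, map_X, map_C,
    Complex.ofRealHom_eq_coe]
  push_cast
  simp only [map_add, map_sub, map_mul, map_pow, map_one, map_ofNat]
  ring

/-- Physicality conditions for the canonical, aligned two-qubit operator. -/
theorem stmt0 (c t : Fin 3 → ℝ) :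
    (rhoTilde c t).PosSemidef ↔
      ((norm3 c) ^ 4
          - 2 * (norm3 c) ^ 2 * (1 - t 0 ^ 2 - t 1 ^ 2 - t 2 ^ 2)
          - 4 * (t 0 ^ 2 * c 0 ^ 2 + t 1 ^ 2 * c 1 ^ 2 + t 2 ^ 2 * c 2 ^ 2)
          + (1 + t 0 + t 1 - t 2) * (1 + t 0 - t 1 + t 2)
            * (1 - t 0 + t 1 + t 2) * (1 - t 0 - t 1 - t 2) ≥ 0
        ∧ (norm3 c) ^ 2 ≤ 1 - (t 0 ^ 2 + t 1 ^ 2 + t 2 ^ 2) - 2 * (t 0 * t 1 * t 2)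
        ∧ (norm3 c) ^ 2 + t 0 ^ 2 + t 1 ^ 2 + t 2 ^ 2 ≤ 3) := by
  have hherm : ((4 : ℝ) • rhoTilde c t).IsHermitian :=
    (rhoTilde_isHermitian c t).smul (.all 4)
  rw [← posSemidef_smul_iff four_pos, posSemidef_iff_charpoly_neg_coeff_nonneg hherm,
    charpoly_neg_four_smul_rhoTilde]
  simp only [coeff_map, Complex.ofRealHom_eq_coe, Complex.zero_le_real,
    coeff_monic_quartic_nonneg_iff]
  constructor
  · rintro ⟨-, hquadratic, hlinear, hconst⟩
    exact ⟨hconst, by linarith, by linarith⟩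
  · rintro ⟨hconst, hlinear, hquadratic⟩
    exact ⟨by norm_num, by linarith, by linarith, hconst⟩
end
end

section
/- Let c, t ∈ ℝ³. If ρ̃(c,t) is positive semidefinite and the determinant of its partial transpose on the second qubit is negative (det ρ̃(c,t)^{T_B} < 0; this determinant is real since ρ̃(c,t)^{T_B} is Hermitian), then t₁t₂t₃ < 0, i.e. the steering ellipsoid of the (necessarily entangled) state is left-handed. -/
open Matrix Kronecker Polynomial
open scoped ComplexOrder

noncomputable section

/-- Partial transpose on the second qubit: `ρ^{T_B}_{(i,j),(k,l)} = ρ_{(i,l),(k,j)}`. -/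
def ptB (ρ : Matrix (Fin 2 × Fin 2) (Fin 2 × Fin 2) ℂ) :
    Matrix (Fin 2 × Fin 2) (Fin 2 × Fin 2) ℂ :=
  Matrix.of fun p q => ρ (p.1, q.2) (q.1, p.2)

/-!
For a `4 × 4` matrix `M` indexed by pairs of bits, write `M^{T_B}` for its partial transpose and
`M'` for its realignment, which groups the two indices of the first factor into the row and those
of the second factor into the column. Over any commutative ring,
`det M - det M^{T_B} = det M'`; this is the Luque–Thibon syzygy between the three determinants of
a four-qubit tensor. Realignment sends `A ⊗ B` to the rank-one matrix `vec A (vec B)ᵀ`, hence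
`ρ = (1/4) Σ R μ ν (σ_μ ⊗ σ_ν)` to `(1/4) S R Sᵀ`, where the columns of `S` are the vectorized Pauli
matrices. As `(det S)² = -16`, this gives `det ρ - det ρ^{T_B} = -(1/16) det R`. A state has
`det ρ ≥ 0`, so `det ρ^{T_B} < 0` forces `det R < 0`, and for the canonical operator
`det R = t₁t₂t₃`.
-/

section Realignment

variable {l m n p ι κ R : Type*}

/-- The realignment of a matrix on a product index set, `(i, k), (j, l) ↦ M (i, j) (k, l)`.
Pairs are ordered so that a matrix is vectorized row by row, unlike `Matrix.vec`. -/
def realign (M : Matrix (l × n) (m × p) R) : Matrix (l × m) (n × p) R :=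
  of fun a b => M (a.1, b.1) (a.2, b.2)

/-- The matrix whose `i`-th column is the row-by-row vectorization of `A i`; it relates
the coefficients of a Kronecker expansion to the realigned matrix. -/
def vecColumns (A : ι → Matrix l m R) : Matrix (l × m) ι R :=
  of fun a i => A i a.1 a.2

/-- The partial transpose on the second tensor factor, over any coefficients; `ptB` is
the complex two-qubit case. -/
def partialTranspose (M : Matrix (l × n) (m × p) R) : Matrix (l × p) (m × n) R :=
  of fun a b => M (a.1, b.2) (b.1, a.2)

theorem realign_smul {S : Type*} [SMul S R] (s : S) (M : Matrix (l × n) (m × p) R) :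
    realign (s • M) = s • realign M :=
  rfl

theorem realign_sum_smul_kronecker [Fintype ι] [Fintype κ] [CommSemiring R]
    (A : ι → Matrix l m R) (B : κ → Matrix n p R) (C : Matrix ι κ R) :
    realign (∑ i, ∑ j, C i j • (A i ⊗ₖ B j)) = vecColumns A * C * (vecColumns B)ᵀ := by
  ext a b
  simp only [realign, vecColumns, of_apply, Matrix.sum_apply, Matrix.smul_apply, smul_eq_mul,
    kronecker_apply, mul_apply, transpose_apply, Finset.sum_mul]
  rw [Finset.sum_comm]
  refine Finset.sum_congr rfl fun j _ => Finset.sum_congr rfl fun i _ => ?_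
  ring

end Realignment

section Determinants

variable {m n R : Type*} [CommRing R]

theorem det_mul_mul_of_equiv [Fintype m] [DecidableEq m] [Fintype n] [DecidableEq n]
    (e : n ≃ m) (V : Matrix m n R) (A : Matrix n n R) (W : Matrix n m R) :
    (V * A * W).det = (V.submatrix e id).det * A.det * (W.submatrix id e).det := by
  rw [← det_submatrix_equiv_self e, ← det_mul, ← det_mul]
  rfl

theorem det_fin_four (A : Matrix (Fin 4) (Fin 4) R) :
    A.det =
      (A.submatrix ![0, 1] ![0, 1]).det * (A.submatrix ![2, 3] ![2, 3]).det
      - (A.submatrix ![0, 1] ![0, 2]).det * (A.submatrix ![2, 3] ![1, 3]).det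
      + (A.submatrix ![0, 1] ![0, 3]).det * (A.submatrix ![2, 3] ![1, 2]).det
      + (A.submatrix ![0, 1] ![1, 2]).det * (A.submatrix ![2, 3] ![0, 3]).det
      - (A.submatrix ![0, 1] ![1, 3]).det * (A.submatrix ![2, 3] ![0, 2]).det
      + (A.submatrix ![0, 1] ![2, 3]).det * (A.submatrix ![2, 3] ![0, 1]).det := by
  have hsucc : (Fin.succ : Fin 3 → Fin 4) = ![1, 2, 3] := by decide
  have hskip₀ : (0 : Fin 4).succAbove = ![1, 2, 3] := by decide
  have hskip₁ : (1 : Fin 4).succAbove = ![0, 2, 3] := by decide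
  have hskip₂ : (2 : Fin 4).succAbove = ![0, 1, 3] := by decide
  have hskip₃ : (3 : Fin 4).succAbove = ![0, 1, 2] := by decide
  rw [det_succ_row_zero, Fin.sum_univ_four, hsucc, hskip₀, hskip₁, hskip₂, hskip₃]
  simp only [det_fin_two, det_fin_three, submatrix_apply, cons_val, Fin.coe_ofNat_eq_mod]
  ring

/-- The lexicographic numbering of pairs of bits, used to evaluate `4 × 4` determinants. -/
def bitPairEquiv : Fin 4 ≃ Fin 2 × Fin 2 :=
  (finProdFinEquiv (m := 2) (n := 2)).symm

theorem det_fin_two_prod (M : Matrix (Fin 2 × Fin 2) (Fin 2 × Fin 2) R) :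
    M.det =
      det !![M (0, 0) (0, 0), M (0, 0) (0, 1), M (0, 0) (1, 0), M (0, 0) (1, 1);
        M (0, 1) (0, 0), M (0, 1) (0, 1), M (0, 1) (1, 0), M (0, 1) (1, 1);
        M (1, 0) (0, 0), M (1, 0) (0, 1), M (1, 0) (1, 0), M (1, 0) (1, 1);
        M (1, 1) (0, 0), M (1, 1) (0, 1), M (1, 1) (1, 0), M (1, 1) (1, 1)] := by
  rw [← det_submatrix_equiv_self bitPairEquiv]
  congr 1
  ext i j
  fin_cases i <;> fin_cases j <;> rfl

theorem det_sub_det_partialTranspose (M : Matrix (Fin 2 × Fin 2) (Fin 2 × Fin 2) R) :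
    M.det - (partialTranspose M).det = (realign M).det := by
  simp only [det_fin_two_prod, partialTranspose, realign, of_apply, det_fin_four, det_fin_two,
    submatrix_apply, cons_val]
  ring

end Determinants

section Pauli

/-- The two-qubit operator with correlation matrix `R` in the Pauli basis,
`(1/4) Σ R μ ν (σ_μ ⊗ σ_ν)`. -/
def pauliExpansion (R : Matrix (Fin 4) (Fin 4) ℂ) : Matrix (Fin 2 × Fin 2) (Fin 2 × Fin 2) ℂ :=
  (1 / 4 : ℂ) • ∑ μ, ∑ ν, R μ ν • (pauli μ ⊗ₖ pauli ν)

/-- The correlation matrix of the canonical operator `rhoTilde c t`: the first column carries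
the centre `c`, the diagonal the signed semiaxes `t`. -/
def canonicalCorrelation (c t : Fin 3 → ℝ) : Matrix (Fin 4) (Fin 4) ℝ :=
  !![1, 0, 0, 0;
    c 0, t 0, 0, 0;
    c 1, 0, t 1, 0;
    c 2, 0, 0, t 2]

/-- The vectorized Pauli matrices as columns, with the entry positions numbered by
`bitPairEquiv` so that the determinant makes sense. -/
def pauliVecColumns : Matrix (Fin 4) (Fin 4) ℂ :=
  (vecColumns pauli).submatrix bitPairEquiv id

theorem det_pauliVecColumns : pauliVecColumns.det = -4 * Complex.I := by
  have hentries : pauliVecColumns =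
      !![1, 0, 0, 1;
        0, 1, -Complex.I, 0;
        0, 1, Complex.I, 0;
        1, 0, 0, -1] := by
    ext i j
    fin_cases i <;> fin_cases j <;> rfl
  rw [hentries]
  simp only [det_fin_four, det_fin_two, submatrix_apply, of_apply, cons_val]
  ring

theorem det_realign_pauliExpansion (R : Matrix (Fin 4) (Fin 4) ℂ) :
    (realign (pauliExpansion R)).det = -R.det / 16 :=
  calc (realign (pauliExpansion R)).det
      = (1 / 4) ^ 4 * (vecColumns pauli * R * (vecColumns pauli)ᵀ).det := by
        rw [pauliExpansion, realign_smul, realign_sum_smul_kronecker, det_smul]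
        rfl
    _ = (1 / 4) ^ 4 * (pauliVecColumns.det * R.det * pauliVecColumnsᵀ.det) := by
        rw [det_mul_mul_of_equiv bitPairEquiv, pauliVecColumns, transpose_submatrix]
    _ = (1 / 4) ^ 4 * (-4 * Complex.I) ^ 2 * R.det := by
        rw [det_transpose, det_pauliVecColumns]
        ring
    _ = -R.det / 16 := by
        rw [mul_pow, Complex.I_sq]
        ring

theorem det_pauliExpansion_sub_det_ptB (R : Matrix (Fin 4) (Fin 4) ℂ) :
    (pauliExpansion R).det - (ptB (pauliExpansion R)).det = -R.det / 16 :=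
  (det_sub_det_partialTranspose _).trans (det_realign_pauliExpansion R)

theorem rhoTilde_eq_pauliExpansion (c t : Fin 3 → ℝ) :
    rhoTilde c t = pauliExpansion ((canonicalCorrelation c t).map (↑)) := by
  have hone : pauli 0 ⊗ₖ pauli 0 = 1 := by
    rw [pauli, ← one_fin_two, one_kronecker_one]
  simp only [rhoTilde, pauliExpansion, canonicalCorrelation, Fin.sum_univ_three, Fin.sum_univ_four,
    map_apply, of_apply, cons_val, Fin.reduceSucc, Complex.ofReal_zero, Complex.ofReal_one,
    zero_smul, one_smul, add_zero, hone]
  congr 1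
  abel

theorem det_canonicalCorrelation (c t : Fin 3 → ℝ) :
    (canonicalCorrelation c t).det = t 0 * t 1 * t 2 := by
  have hlower : (canonicalCorrelation c t).IsLowerTriangular := by
    intro i j hij
    fin_cases i <;> fin_cases j <;> first | rfl | exact absurd hij (by decide)
  rw [det_of_isLowerTriangular _ hlower, Fin.prod_univ_four]
  simp [canonicalCorrelation]

end Pauli

theorem stmt1_general (R : Matrix (Fin 4) (Fin 4) ℝ)
    (hρ : 0 ≤ (pauliExpansion (R.map (↑))).det.re)
    (hdet : (ptB (pauliExpansion (R.map (↑)))).det.re < 0) :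
    R.det < 0 := by
  have hcast : (R.map ((↑) : ℝ → ℂ)).det = (R.det : ℂ) := (Complex.ofRealHom.map_det R).symm
  have hdiff := congrArg Complex.re (det_pauliExpansion_sub_det_ptB (R.map (↑)))
  rw [hcast, Complex.sub_re, Complex.div_ofNat_re, Complex.neg_re, Complex.ofReal_re] at hdiff
  linarith

/-- A canonical two-qubit state with negative partial-transpose determinant (i.e. an
entangled state) must have a left-handed steering ellipsoid: `t₁t₂t₃ < 0`. -/
theorem stmt1 (c t : Fin 3 → ℝ) (hpsd : (rhoTilde c t).PosSemidef)
    (hdet : ((ptB (rhoTilde c t)).det).re < 0) :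
    t 0 * t 1 * t 2 < 0 := by
  rw [rhoTilde_eq_pauliExpansion] at hpsd hdet
  exact det_canonicalCorrelation c t ▸ stmt1_general _ (Complex.le_def.1 hpsd.det_nonneg).1 hdet
end
end

section
/- Let 0 ≤ c ≤ 1 and r ≥ 0. The canonical state whose steering ellipsoid is the circle of radius r in the equatorial plane with centre (c,0,0), namely ρ̃((c,0,0),(r,r,0)), is positive semidefinite if and only if r ≤ (1 − c²)/2. -/
open Matrix Kronecker Polynomial
open scoped ComplexOrder

noncomputable section

/-!
The parity `σ₁ ⊗ σ₁` commutes with `ρ̃((c,0,0), t)` for every `t`, and on its two eigenspaces the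
operator restricts to multiples of the one-qubit operators `(1 ± t₁) σ₀ + c σ₁ + (t₃ ∓ t₂) σ₃`.
An operator `p σ₀ + v · σ` has trace `2p` and determinant `p² - ‖v‖²`, so it is positive
semidefinite exactly when `‖v‖ ≤ p`. For `t = (r, r, 0)` the two conditions read
`√(c² + r²) ≤ 1 ± r`, that is, `|r| ≤ (1 - c²) / 2`.
-/

section PosSemidef

variable {R : Type*} {n o : Type*}

lemma posSemidef_smul_iff_of_pos {α : Type*} [Semifield α] [LinearOrder α] [IsStrictOrderedRing α]
    [StarRing α] [StarOrderedRing α] [Ring R] [PartialOrder R] [StarRing R] [Algebra α R]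
    [StarModule α R] [PosSMulMono α R] {A : Matrix n n R} {a : α} (ha : 0 < a) :
    (a • A).PosSemidef ↔ A.PosSemidef := by
  refine ⟨fun h ↦ ?_, fun h ↦ h.smul ha.le⟩
  simpa only [inv_smul_smul₀ ha.ne'] using h.smul (inv_nonneg.2 ha.le)

lemma dotProduct_blockDiagonal_mulVec [NonUnitalNonAssocSemiring R] [Fintype n] [Fintype o]
    [DecidableEq o] (A : o → Matrix n n R) (x y : n × o → R) :
    x ⬝ᵥ (blockDiagonal A *ᵥ y) =
      ∑ k, (fun i ↦ x (i, k)) ⬝ᵥ (A k *ᵥ fun i ↦ y (i, k)) := by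
  simp only [dotProduct, mulVec, blockDiagonal_apply, Fintype.sum_prod_type_right, ite_mul,
    zero_mul, Finset.sum_comm (γ := o), Finset.sum_ite_eq, Finset.mem_univ, if_true]

lemma posSemidef_blockDiagonal_iff [Ring R] [PartialOrder R] [IsOrderedAddMonoid R] [StarRing R]
    [Finite n] [Finite o] [DecidableEq o] {A : o → Matrix n n R} :
    (blockDiagonal A).PosSemidef ↔ ∀ k, (A k).PosSemidef := by
  have := Fintype.ofFinite n
  have := Fintype.ofFinite o
  refine ⟨fun h k ↦ ?_, fun h ↦ .of_dotProduct_mulVec_nonneg ?_ fun x ↦ ?_⟩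
  · have block_eq : (blockDiagonal A).submatrix (·, k) (·, k) = A k := by
      ext i j
      simp only [submatrix_apply, blockDiagonal_apply_eq]
    exact block_eq ▸ h.submatrix (·, k)
  · rw [IsHermitian, blockDiagonal_conjTranspose]
    exact congrArg blockDiagonal (funext fun k ↦ (h k).isHermitian)
  · rw [dotProduct_blockDiagonal_mulVec]
    exact Finset.sum_nonneg fun k _ ↦ (h k).dotProduct_mulVec_nonneg _

lemma add_nonneg_and_mul_nonneg_iff [Ring R] [LinearOrder R] [IsStrictOrderedRing R] {a b : R} :
    0 ≤ a + b ∧ 0 ≤ a * b ↔ 0 ≤ a ∧ 0 ≤ b := by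
  refine ⟨fun ⟨hadd, hmul⟩ ↦ ?_, fun ⟨ha, hb⟩ ↦ ⟨add_nonneg ha hb, mul_nonneg ha hb⟩⟩
  rcases mul_nonneg_iff.1 hmul with h | ⟨ha, hb⟩
  · exact h
  · exact ⟨hadd.trans (add_le_of_nonpos_right hb), hadd.trans (add_le_of_nonpos_left ha)⟩

lemma posSemidef_fin_two_iff_trace_det_nonneg {𝕜 : Type*} [RCLike 𝕜]
    {A : Matrix (Fin 2) (Fin 2) 𝕜} (hA : A.IsHermitian) :
    A.PosSemidef ↔ 0 ≤ A.trace ∧ 0 ≤ A.det := by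
  rw [hA.posSemidef_iff_eigenvalues_nonneg, hA.trace_eq_sum_eigenvalues,
    hA.det_eq_prod_eigenvalues, Fin.sum_univ_two, Fin.prod_univ_two, ← RCLike.ofReal_add,
    ← RCLike.ofReal_mul, RCLike.ofReal_nonneg, RCLike.ofReal_nonneg,
    add_nonneg_and_mul_nonneg_iff, Pi.le_def, Fin.forall_fin_two, Pi.zero_apply,
    Pi.zero_apply]

end PosSemidef

/-- The one-qubit operator `p σ₀ + v · σ`; for `p = 1` it is twice the density operator with Bloch
vector `v`. -/
def blochOperator (p : ℝ) (v : Fin 3 → ℝ) : Matrix (Fin 2) (Fin 2) ℂ :=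
  (p : ℂ) • pauli 0 + ∑ i : Fin 3, (v i : ℂ) • pauli i.succ

lemma blochOperator_eq (p : ℝ) (v : Fin 3 → ℝ) :
    blochOperator p v =
      !![(p : ℂ) + v 2, v 0 - v 1 * Complex.I; v 0 + v 1 * Complex.I, (p : ℂ) - v 2] := by
  ext i j
  fin_cases i <;> fin_cases j <;>
    simp [blochOperator, pauli, Fin.sum_univ_three, sub_eq_add_neg]

lemma isHermitian_blochOperator (p : ℝ) (v : Fin 3 → ℝ) : (blochOperator p v).IsHermitian := by
  rw [blochOperator_eq]
  ext i j
  fin_cases i <;> fin_cases j <;> simp [sub_eq_add_neg]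

lemma trace_blochOperator (p : ℝ) (v : Fin 3 → ℝ) :
    (blochOperator p v).trace = (2 * p : ℝ) := by
  rw [blochOperator_eq, trace_fin_two_of]
  push_cast
  ring

lemma det_blochOperator (p : ℝ) (v : Fin 3 → ℝ) :
    (blochOperator p v).det = (p ^ 2 - ∑ i, v i ^ 2 : ℝ) := by
  rw [blochOperator_eq, det_fin_two_of, Fin.sum_univ_three]
  push_cast
  linear_combination (v 1 : ℂ) ^ 2 * Complex.I_sq

theorem blochOperator_posSemidef_iff {p : ℝ} {v : Fin 3 → ℝ} :
    (blochOperator p v).PosSemidef ↔ norm3 v ≤ p := by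
  rw [posSemidef_fin_two_iff_trace_det_nonneg (isHermitian_blochOperator p v), trace_blochOperator,
    det_blochOperator, Complex.zero_le_real, Complex.zero_le_real, norm3, Real.sqrt_le_iff,
    sub_nonneg, mul_nonneg_iff_of_pos_left two_pos]

/-- The change of basis (unitary up to a factor `√2`) to eigenvectors of the parity
`σ₁ ⊗ σ₁`: column `(i, 0)` is `eᵢ ⊗ e₀ + σ₁ eᵢ ⊗ e₁`, of parity `1`, and column `(i, 1)` is
`eᵢ ⊗ e₀ - σ₁ eᵢ ⊗ e₁`, of parity `-1`. -/
def parityBasis : Matrix (Fin 2 × Fin 2) (Fin 2 × Fin 2) ℂ :=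
  pauli 0 ⊗ₖ !![1, 1; 0, 0] + pauli 1 ⊗ₖ !![0, 0; 1, -1]

lemma star_parityBasis_mul_self : star parityBasis * parityBasis = (2 : ℝ) • 1 := by
  ext ⟨i, j⟩ ⟨k, l⟩
  fin_cases i <;> fin_cases j <;> fin_cases k <;> fin_cases l <;>
    simp [parityBasis, pauli, mul_apply, Fintype.sum_prod_type] <;> norm_num

lemma isUnit_parityBasis : IsUnit parityBasis := by
  refine .of_mul_eq_one_right ((1 / 2 : ℝ) • star parityBasis) ?_
  rw [smul_mul_assoc, star_parityBasis_mul_self, smul_smul, one_div_mul_cancel two_ne_zero,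
    one_smul]

/-- The restrictions of `4 ρ̃((c,0,0), t)` to the eigenspaces of `σ₁ ⊗ σ₁` for `1` and `-1`,
written in the basis `parityBasis`. -/
def parityBlock (c : ℝ) (t : Fin 3 → ℝ) : Fin 2 → Matrix (Fin 2) (Fin 2) ℂ :=
  ![blochOperator (1 + t 0) ![c, 0, t 2 - t 1], blochOperator (1 - t 0) ![c, 0, t 2 + t 1]]

lemma rhoTilde_mul_parityBasis (c : ℝ) (t : Fin 3 → ℝ) :
    rhoTilde ![c, 0, 0] t * parityBasis =
      parityBasis * ((1 / 4 : ℝ) • blockDiagonal (parityBlock c t)) := by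
  ext ⟨i, j⟩ ⟨k, l⟩
  fin_cases i <;> fin_cases j <;> fin_cases k <;> fin_cases l <;>
    simp [parityBasis, parityBlock, rhoTilde, blochOperator_eq, pauli, mul_apply,
      Fintype.sum_prod_type, Fin.sum_univ_three, blockDiagonal_apply] <;> ring

lemma star_parityBasis_mul_rhoTilde_mul_parityBasis (c : ℝ) (t : Fin 3 → ℝ) :
    star parityBasis * rhoTilde ![c, 0, 0] t * parityBasis =
      (1 / 2 : ℝ) • blockDiagonal (parityBlock c t) := by
  rw [mul_assoc, rhoTilde_mul_parityBasis, ← mul_assoc, star_parityBasis_mul_self,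
    smul_mul_smul_comm, one_mul]
  norm_num

theorem rhoTilde_posSemidef_iff_of_center_on_axis (c : ℝ) (t : Fin 3 → ℝ) :
    (rhoTilde ![c, 0, 0] t).PosSemidef ↔
      norm3 ![c, 0, t 2 - t 1] ≤ 1 + t 0 ∧ norm3 ![c, 0, t 2 + t 1] ≤ 1 - t 0 := by
  rw [← isUnit_parityBasis.posSemidef_star_left_conjugate_iff,
    star_parityBasis_mul_rhoTilde_mul_parityBasis, posSemidef_smul_iff_of_pos one_half_pos,
    posSemidef_blockDiagonal_iff, Fin.forall_fin_two]
  exact and_congr blochOperator_posSemidef_iff blochOperator_posSemidef_iff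

lemma norm3_le_one_sub_iff {c r : ℝ} : norm3 ![c, 0, r] ≤ 1 - r ↔ r ≤ (1 - c ^ 2) / 2 := by
  simp only [norm3, Fin.sum_univ_three, Real.sqrt_le_iff, cons_val]
  constructor
  · rintro ⟨-, hsq⟩
    linarith
  · intro hr
    constructor <;> linarith [sq_nonneg c]

theorem stmt3_general (c r : ℝ) :
    (rhoTilde ![c, 0, 0] ![r, r, 0]).PosSemidef ↔ |r| ≤ (1 - c ^ 2) / 2 := by
  have hneg : norm3 ![c, 0, -r] ≤ 1 + r ↔ -r ≤ (1 - c ^ 2) / 2 := by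
    rw [← norm3_le_one_sub_iff, sub_neg_eq_add]
  rw [rhoTilde_posSemidef_iff_of_center_on_axis, abs_le', and_comm, ← hneg,
    ← norm3_le_one_sub_iff]
  simp only [cons_val, zero_add, zero_sub]

/-- Physicality boundary for a circular steering ellipsoid of radius `r` in the
equatorial plane with centre `(c,0,0)`: physical iff `r ≤ (1 - c²)/2`. -/
theorem stmt3 (c r : ℝ) (hc0 : 0 ≤ c) (hc1 : c ≤ 1) (hr : 0 ≤ r) :
    (rhoTilde ![c, 0, 0] ![r, r, 0]).PosSemidef ↔ r ≤ (1 - c ^ 2) / 2 := by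
  rw [stmt3_general, abs_of_nonneg hr]
end
end

section
/- Let t ∈ ℝ³ and let τ = ρ̃((0,0,0),t) be the corresponding Bell-diagonal operator. If τ is positive semidefinite, then its eigenvalues λ₁ ≥ λ₂ ≥ λ₃ ≥ λ₄ (real, since τ is Hermitian) satisfy λ₁ − λ₂ − λ₃ − λ₄ ≤ √|t₁t₂t₃|; for Bell-diagonal states max(0, λ₁−λ₂−λ₃−λ₄) is the concurrence, so C(τ) ≤ √|t₁t₂t₃|. Moreover, for every p₀ ∈ [0,1] the Bell-diagonal state with t = (p₀, p₀, −1) is positive semidefinite and saturates the bound: its eigenvalues satisfy λ₁ − λ₂ − λ₃ − λ₄ = p₀ = √|t₁t₂t₃|. -/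
open Matrix Kronecker Polynomial
open scoped ComplexOrder

noncomputable section

/-!
The Bell states diagonalize every `σᵢ ⊗ σᵢ`, with signs whose product over `i` is `-1`. Hence each
eigenvalue of a Bell-diagonal operator is `(1 + a + b + c) / 4`, where `a`, `b`, `c` are the `tᵢ` up
to signs and `|abc| = |t₁t₂t₃|`, while the other three arise by flipping two of these signs. As the
trace is `1`, the quantity `λ₁ - λ₂ - λ₃ - λ₄` equals `x = 2λ₁ - 1 = (a + b + c - 1) / 2`.
The numbers `a - x`, `b - x`, `c - x` are twice the other eigenvalues, so they are nonnegative, and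
they sum to `1 - x`; expanding `abc` in powers of `x` then gives `x² ≤ abc` whenever `0 ≤ x`.
-/

section Charpoly

variable {n R : Type*} [Fintype n] [DecidableEq n] [CommRing R]

lemma trace_eq_sum_of_charpoly_eq_prod {ι : Type*} [Fintype ι]
    {A : Matrix n n R} {μ : ι → R} (hA : A.charpoly = ∏ i, (X - C (μ i))) :
    A.trace = ∑ i, μ i := by
  rw [trace_eq_neg_charpoly_nextCoeff, hA, prod_X_sub_C_nextCoeff, neg_neg]

lemma charpoly_unitary_conj_diagonal [StarRing R] {U : Matrix n n R}
    (hU : U ∈ unitaryGroup n R) (d : n → R) :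
    (U * diagonal d * star U).charpoly = ∏ i, (X - C (d i)) := by
  rw [charpoly_mul_comm, ← mul_assoc, mem_unitaryGroup_iff'.mp hU, one_mul, charpoly_diagonal]

end Charpoly

/-- The change of basis from the computational basis of two qubits to the Bell basis: column
`(a, b)` is the Bell state `(|0, b⟩ + (-1)ᵃ |1, b + 1⟩) / √2`. -/
def bellMatrix : Matrix (Fin 2 × Fin 2) (Fin 2 × Fin 2) ℂ :=
  of fun k l ↦ if k.2 = k.1 + l.2 then (-1) ^ (k.1 * l.1 : ℕ) * (√2 : ℂ)⁻¹ else 0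

/-- The correlations of the Bell state `(a, b)`: component `i` is the eigenvalue of
`pauli i.succ ⊗ₖ pauli i.succ` on column `(a, b)` of `bellMatrix`. -/
def bellCorrelation (k : Fin 2 × Fin 2) : Fin 3 → ℝ :=
  ![(-1) ^ (k.1 : ℕ), -(-1) ^ (k.1 + k.2 : ℕ), (-1) ^ (k.2 : ℕ)]

/-- The eigenvalue of the Bell-diagonal operator `rhoTilde ![0, 0, 0] t` on the Bell state `k`. -/
def bellEigenvalue (t : Fin 3 → ℝ) (k : Fin 2 × Fin 2) : ℝ :=
  (1 + ∑ i, t i * bellCorrelation k i) / 4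

lemma bellMatrix_mem_unitaryGroup : bellMatrix ∈ unitaryGroup (Fin 2 × Fin 2) ℂ := by
  have inv_sqrt_two_sq : (√2 : ℂ)⁻¹ * (√2 : ℂ)⁻¹ = 1 / 2 := by
    rw [← mul_inv, ← Complex.ofReal_mul, Real.mul_self_sqrt zero_le_two]
    norm_num
  rw [mem_unitaryGroup_iff]
  ext ⟨i, j⟩ ⟨k, l⟩
  fin_cases i <;> fin_cases j <;> fin_cases k <;> fin_cases l <;>
    simp [bellMatrix, mul_apply, Fintype.sum_prod_type, inv_sqrt_two_sq] <;> norm_num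

lemma pauli_kronecker_self_mul_bellMatrix (i : Fin 3) :
    (pauli i.succ ⊗ₖ pauli i.succ) * bellMatrix =
      bellMatrix * diagonal (fun k ↦ (bellCorrelation k i : ℂ)) := by
  ext ⟨x, y⟩ ⟨a, b⟩
  fin_cases i <;> fin_cases x <;> fin_cases y <;> fin_cases a <;> fin_cases b <;>
    simp [pauli, bellMatrix, bellCorrelation, mul_apply, Fintype.sum_prod_type]

lemma diagonal_bellEigenvalue (t : Fin 3 → ℝ) :
    diagonal (fun k ↦ (bellEigenvalue t k : ℂ)) =
      (1 / 4 : ℂ) • (1 + ∑ i, (t i : ℂ) • diagonal (fun k ↦ (bellCorrelation k i : ℂ))) := by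
  ext k l
  by_cases hkl : k = l
  · subst hkl
    simp [bellEigenvalue, Matrix.sum_apply, div_eq_inv_mul]
  · simp [hkl, Matrix.sum_apply]

lemma rhoTilde_mul_bellMatrix (t : Fin 3 → ℝ) :
    rhoTilde ![0, 0, 0] t * bellMatrix =
      bellMatrix * diagonal (fun k ↦ (bellEigenvalue t k : ℂ)) := by
  have center_eq_zero :
      ∑ i : Fin 3, ((![0, 0, 0] : Fin 3 → ℝ) i : ℂ) • (pauli i.succ ⊗ₖ pauli 0) = 0 := by
    simp [Fin.sum_univ_three]
  rw [diagonal_bellEigenvalue, rhoTilde, center_eq_zero, add_zero]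
  simp only [Matrix.smul_mul, Matrix.mul_smul, add_mul, mul_add, one_mul, mul_one,
    Finset.sum_mul, Finset.mul_sum, pauli_kronecker_self_mul_bellMatrix]

lemma rhoTilde_eq_bellMatrix_conj_diagonal (t : Fin 3 → ℝ) :
    rhoTilde ![0, 0, 0] t =
      bellMatrix * diagonal (fun k ↦ (bellEigenvalue t k : ℂ)) * star bellMatrix := by
  rw [← rhoTilde_mul_bellMatrix, mul_assoc, mem_unitaryGroup_iff.mp bellMatrix_mem_unitaryGroup,
    mul_one]

lemma charpoly_rhoTilde (t : Fin 3 → ℝ) :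
    (rhoTilde ![0, 0, 0] t).charpoly = ∏ k, (X - C (bellEigenvalue t k : ℂ)) := by
  rw [rhoTilde_eq_bellMatrix_conj_diagonal,
    charpoly_unitary_conj_diagonal bellMatrix_mem_unitaryGroup]

lemma posSemidef_rhoTilde_iff {t : Fin 3 → ℝ} :
    (rhoTilde ![0, 0, 0] t).PosSemidef ↔ ∀ k, 0 ≤ bellEigenvalue t k := by
  have isUnit_bellMatrix : IsUnit bellMatrix :=
    Unitary.isUnit_coe (U := ⟨bellMatrix, bellMatrix_mem_unitaryGroup⟩)
  rw [rhoTilde_eq_bellMatrix_conj_diagonal, isUnit_bellMatrix.posSemidef_star_right_conjugate_iff,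
    posSemidef_diagonal_iff]
  simp only [Complex.zero_le_real]

lemma trace_rhoTilde (c t : Fin 3 → ℝ) : (rhoTilde c t).trace = 1 := by
  have trace_pauli_succ (i : Fin 3) : (pauli i.succ).trace = 0 := by
    fin_cases i <;> simp [pauli, trace_fin_two]
  simp [rhoTilde, trace_sum, trace_kronecker, trace_pauli_succ]

lemma half_add_sub_one_le_sqrt_abs_mul {a b c : ℝ} (ha : 0 ≤ 1 + a - b - c)
    (hb : 0 ≤ 1 - a + b - c) (hc : 0 ≤ 1 - a - b + c) :
    (a + b + c - 1) / 2 ≤ √|a * b * c| := by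
  set x := (a + b + c - 1) / 2 with hx
  have hu : 0 ≤ a - x := by linarith
  have hv : 0 ≤ b - x := by linarith
  have hw : 0 ≤ c - x := by linarith
  rcases le_total x 0 with hx₀ | hx₀
  · exact hx₀.trans (Real.sqrt_nonneg _)
  refine Real.le_sqrt_of_sq_le ?_
  calc x ^ 2
      ≤ x ^ 2 + x * ((a - x) * (b - x) + (a - x) * (c - x) + (b - x) * (c - x))
          + (a - x) * (b - x) * (c - x) := by
        have quadratic_nonneg :
            0 ≤ x * ((a - x) * (b - x) + (a - x) * (c - x) + (b - x) * (c - x)) := by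
          positivity
        have cubic_nonneg : 0 ≤ (a - x) * (b - x) * (c - x) := by positivity
        linarith
    _ = a * b * c := by rw [hx]; ring
    _ ≤ |a * b * c| := le_abs_self _

lemma bellEigenvalue_eq (t : Fin 3 → ℝ) (k : Fin 2 × Fin 2) :
    bellEigenvalue t k =
      !![(1 + t 0 - t 1 + t 2) / 4, (1 + t 0 + t 1 - t 2) / 4;
         (1 - t 0 + t 1 + t 2) / 4, (1 - t 0 - t 1 - t 2) / 4] k.1 k.2 := by
  fin_cases k <;> simp [bellEigenvalue, bellCorrelation, Fin.sum_univ_three] <;> ring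

lemma two_mul_bellEigenvalue_zero_sub_one_le {t : Fin 3 → ℝ} (ht : ∀ k, 0 ≤ bellEigenvalue t k) :
    2 * bellEigenvalue t 0 - 1 ≤ √|t 0 * t 1 * t 2| := by
  have ht' (i j : Fin 2) := bellEigenvalue_eq t (i, j) ▸ ht (i, j)
  have ht₀ : 0 ≤ (1 + t 0 + t 1 - t 2) / 4 := ht' 0 1
  have ht₁ : 0 ≤ (1 - t 0 - t 1 - t 2) / 4 := ht' 1 1
  have ht₂ : 0 ≤ (1 - t 0 + t 1 + t 2) / 4 := ht' 1 0
  calc 2 * bellEigenvalue t 0 - 1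
      = 2 * ((1 + t 0 - t 1 + t 2) / 4) - 1 := by rw [bellEigenvalue_eq]; rfl
    _ = (t 0 + -t 1 + t 2 - 1) / 2 := by ring
    _ ≤ √|t 0 * -t 1 * t 2| :=
        half_add_sub_one_le_sqrt_abs_mul (by linarith) (by linarith) (by linarith)
    _ = √|t 0 * t 1 * t 2| := by rw [mul_neg, neg_mul, abs_neg]

lemma bellCorrelation_add (k l : Fin 2 × Fin 2) :
    bellCorrelation (k + l) = bellCorrelation k * bellCorrelation l * bellCorrelation 0 := by
  have neg_one_pow_add (a b : Fin 2) :
      (-1 : ℝ) ^ ((a + b : Fin 2) : ℕ) = (-1) ^ (a : ℕ) * (-1) ^ (b : ℕ) := by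
    fin_cases a <;> fin_cases b <;> simp
  ext i
  fin_cases i
  · simp [bellCorrelation, neg_one_pow_add]
  · simp [bellCorrelation, neg_one_pow_add, pow_add, mul_mul_mul_comm]
  · simp [bellCorrelation, neg_one_pow_add]

lemma bellEigenvalue_add (t : Fin 3 → ℝ) (k l : Fin 2 × Fin 2) :
    bellEigenvalue t (k + l) = bellEigenvalue (t * bellCorrelation k * bellCorrelation 0) l := by
  simp only [bellEigenvalue, bellCorrelation_add, Pi.mul_apply]
  congr! 3
  ring

lemma two_mul_bellEigenvalue_sub_one_le {t : Fin 3 → ℝ} (ht : ∀ k, 0 ≤ bellEigenvalue t k)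
    (k : Fin 2 × Fin 2) : 2 * bellEigenvalue t k - 1 ≤ √|t 0 * t 1 * t 2| := by
  set s : Fin 3 → ℝ := t * bellCorrelation k * bellCorrelation 0 with hs
  have bellEigenvalue_s (l : Fin 2 × Fin 2) : bellEigenvalue s l = bellEigenvalue t (k + l) :=
    (bellEigenvalue_add t k l).symm
  have abs_prod : |s 0 * s 1 * s 2| = |t 0 * t 1 * t 2| := by
    simp [hs, bellCorrelation, abs_mul]
  calc 2 * bellEigenvalue t k - 1
      = 2 * bellEigenvalue s 0 - 1 := by rw [bellEigenvalue_s, add_zero]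
    _ ≤ √|s 0 * s 1 * s 2| :=
        two_mul_bellEigenvalue_zero_sub_one_le fun l ↦ bellEigenvalue_s l ▸ ht (k + l)
    _ = √|t 0 * t 1 * t 2| := by rw [abs_prod]

lemma two_mul_sub_one_le_of_isRoot_charpoly_rhoTilde {t : Fin 3 → ℝ}
    (ht : (rhoTilde ![0, 0, 0] t).PosSemidef) {μ : ℝ}
    (hμ : (rhoTilde ![0, 0, 0] t).charpoly.IsRoot (μ : ℂ)) :
    2 * μ - 1 ≤ √|t 0 * t 1 * t 2| := by
  obtain ⟨k, hk⟩ : ∃ k, μ = bellEigenvalue t k := by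
    simpa [charpoly_rhoTilde, IsRoot.def, eval_prod, Finset.prod_eq_zero_iff, sub_eq_zero] using hμ
  exact hk ▸ two_mul_bellEigenvalue_sub_one_le (posSemidef_rhoTilde_iff.mp ht) k

lemma bellEigenvalue_self_self_neg_one (p : ℝ) (k : Fin 2 × Fin 2) :
    bellEigenvalue ![p, p, -1] k = !![0, (1 + p) / 2; 0, (1 - p) / 2] k.1 k.2 := by
  rw [bellEigenvalue_eq]
  fin_cases k <;> simp <;> ring

lemma posSemidef_rhoTilde_self_self_neg_one {p : ℝ} (hp₀ : 0 ≤ p) (hp₁ : p ≤ 1) :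
    (rhoTilde ![0, 0, 0] ![p, p, -1]).PosSemidef := by
  rw [posSemidef_rhoTilde_iff]
  intro k
  rw [bellEigenvalue_self_self_neg_one]
  fin_cases k <;> simp <;> linarith

lemma charpoly_rhoTilde_self_self_neg_one (p : ℝ) :
    (rhoTilde ![0, 0, 0] ![p, p, -1]).charpoly =
      ∏ i, (X - C ((![(1 + p) / 2, (1 - p) / 2, 0, 0] : Fin 4 → ℝ) i : ℂ)) := by
  rw [charpoly_rhoTilde, Fintype.prod_prod_type, Fin.prod_univ_four]
  simp only [Fin.prod_univ_two, bellEigenvalue_self_self_neg_one, of_apply, cons_val]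
  ring

/-- Concurrence bound for Bell-diagonal states: if `τ = ρ̃(0,t)` is positive
semidefinite then its eigenvalues in non-increasing order satisfy
`λ₁ − λ₂ − λ₃ − λ₄ ≤ √|t₁t₂t₃|` (the left side being the concurrence when positive);
moreover for every `p₀ ∈ [0,1]` the Bell-diagonal state with `t = (p₀,p₀,−1)` is
positive semidefinite and saturates the bound. -/
theorem stmt11 :
    (∀ t : Fin 3 → ℝ, (rhoTilde ![0, 0, 0] t).PosSemidef →
      ∀ lam : Fin 4 → ℝ,
        lam 1 ≤ lam 0 → lam 2 ≤ lam 1 → lam 3 ≤ lam 2 →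
        (rhoTilde ![0, 0, 0] t).charpoly = ∏ i : Fin 4, (X - C ((lam i : ℂ))) →
        lam 0 - lam 1 - lam 2 - lam 3 ≤ Real.sqrt |t 0 * t 1 * t 2|)
    ∧ (∀ p : ℝ, 0 ≤ p → p ≤ 1 →
        (rhoTilde ![0, 0, 0] ![p, p, -1]).PosSemidef ∧
        ∃ lam : Fin 4 → ℝ,
          lam 1 ≤ lam 0 ∧ lam 2 ≤ lam 1 ∧ lam 3 ≤ lam 2 ∧
          (rhoTilde ![0, 0, 0] ![p, p, -1]).charpoly
            = ∏ i : Fin 4, (X - C ((lam i : ℂ))) ∧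
          lam 0 - lam 1 - lam 2 - lam 3 = p ∧
          p = Real.sqrt |p * p * (-1 : ℝ)|) := by
  refine ⟨fun t ht lam _ _ _ hlam ↦ ?_, fun p hp₀ hp₁ ↦ ?_⟩
  · have sum_eq_one : ∑ i, lam i = 1 := by
      have := trace_eq_sum_of_charpoly_eq_prod hlam
      rw [trace_rhoTilde] at this
      exact_mod_cast this.symm
    have root : (rhoTilde ![0, 0, 0] t).charpoly.IsRoot (lam 0 : ℂ) := by
      simp [hlam, IsRoot.def, Fin.prod_univ_four]
    rw [Fin.sum_univ_four] at sum_eq_one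
    linarith [two_mul_sub_one_le_of_isRoot_charpoly_rhoTilde ht root]
  · refine ⟨posSemidef_rhoTilde_self_self_neg_one hp₀ hp₁, ![(1 + p) / 2, (1 - p) / 2, 0, 0],
      ?_, ?_, ?_, charpoly_rhoTilde_self_self_neg_one p, ?_, ?_⟩
    · change (1 - p) / 2 ≤ (1 + p) / 2
      linarith
    · change 0 ≤ (1 - p) / 2
      linarith
    · exact le_rfl
    · change (1 + p) / 2 - (1 - p) / 2 - 0 - 0 = p
      ring
    · rw [mul_neg_one, abs_neg, abs_mul_self, Real.sqrt_mul_self hp₀]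
end
end
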